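/- Let Y be a boundary reduced tiled surface and let C be a non-backtracking cycle in Y^(1). Then: (1) there is a shortest representative cycle in Y^(1) for the free homotopy class of C in Y; (2) if C is a shortest representative of its free homotopy class in Y, then C and C* do not contain any long block or long chain. -/

import Mathlib

/-!
Formalization preamble for "Core Surfaces" (Magee–Puder).

We work with a fixed combinatorial (CW) model.  The surface `Σ_g` has one vertex,
`2g` directed labeled edges (the label `2i` plays the role of `a_{i+1}` and `2i+1`
the role of `b_{i+1}`), and one `4g`-gon glued along `[a₁,b₁]⋯[a_g,b_g]`.

* `Gamma g` is the surface group, presented by the single relator.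
* A `Complex g` is a combinatorial 2-complex with directed, labeled edges and
  2-cells given by their boundary walks; coverings of `Σ_g` are the complexes in
  which every vertex has exactly one incoming/outgoing edge of each label, every
  walk reading the relator is closed, and every closed walk reading the relator
  bounds exactly one face (`IsCovering`).  A tiled surface is a complex that
  embeds into such a covering (`IsTiledSurface`).
* Blocks, chains, boundary cycles (via the ribbon structure coming from the fixed
  cyclic order of the `4g` half-edges around a vertex of `Σ_g`), boundary-reduced
  and strongly boundary-reduced surfaces are defined combinatorially.
* Homotopy of edge-walks is the edge-path-group homotopy: backtrack insertions and
  insertions of boundaries of (present) faces.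
* `cover g J` is the covering space `J\~Σ_g` of `Σ_g` associated to a subgroup
  `J ≤ Γ_g` (vertices = right cosets), and `coreSub g J` is the core surface of
  `J`, defined exactly as in the paper: the union of all shortest representative
  cycles of essential free-homotopy classes, together with all components of the
  complement containing finitely many `4g`-gons.
-/

noncomputable section

namespace CS

/-- Signed letters over the generators `a₁,b₁,…,a_g,b_g` of `Γ_g`
(`a_{i+1} ↦ 2i`, `b_{i+1} ↦ 2i+1`); `true` means a positive letter. -/
abbrev Letter (g : ℕ) := Fin (2 * g) × Bool

/-- The label of the `p`-th letter of the relator `[a₁,b₁][a₂,b₂]⋯[a_g,b_g]`. -/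
def relLabel (g : ℕ) (p : Fin (4 * g)) : Fin (2 * g) :=
  ⟨2 * ((p : ℕ) / 4) + ((p : ℕ) % 4) % 2, by have := p.2; omega⟩

/-- The sign of the `p`-th letter of the relator. -/
def relSign (g : ℕ) (p : Fin (4 * g)) : Bool := decide ((p : ℕ) % 4 < 2)

/-- The relator `[a₁,b₁][a₂,b₂]⋯[a_g,b_g]` as a word (list of signed letters). -/
def relatorWord (g : ℕ) : List (Letter g) :=
  (List.finRange (4 * g)).map fun p => (relLabel g p, relSign g p)

/-- The relator as an element of the free group on the `2g` generators. -/
def relatorF (g : ℕ) : FreeGroup (Fin (2 * g)) :=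
  ((relatorWord g).map fun l => if l.2 then FreeGroup.of l.1 else (FreeGroup.of l.1)⁻¹).prod

/-- The surface group `Γ_g = ⟨a₁,b₁,…,a_g,b_g ∣ [a₁,b₁]⋯[a_g,b_g]⟩`. -/
abbrev Gamma (g : ℕ) := PresentedGroup ({relatorF g} : Set (FreeGroup (Fin (2 * g))))

/-- The image of a signed letter in `Γ_g`. -/
def letterG {g : ℕ} (l : Letter g) : Gamma g :=
  if l.2 then PresentedGroup.of l.1 else (PresentedGroup.of l.1)⁻¹

/-- The image of a word in `Γ_g`. -/
def wordG {g : ℕ} (w : List (Letter g)) : Gamma g := (w.map letterG).prod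

/-- `ℓ(γ^{Γ_g})`: the minimal length of a word in the generators representing the
conjugacy class of `γ` in `Γ_g`. -/
def conjLen {g : ℕ} (γ : Gamma g) : ℕ :=
  sInf {n | ∃ w : List (Letter g), w.length = n ∧ ∃ x : Gamma g, x * wordG w * x⁻¹ = γ}

/-! ### Half-edge positions around a vertex of `Σ_g`

The `4g` half-edges around the vertex `o` of `Σ_g` come in the (clockwise) cyclic
order `a₁`-out, `b₁`-in, `a₁`-in, `b₁`-out, `a₂`-out, `b₂`-in, `a₂`-in, `b₂`-out, …
-/

/-- Position of the outgoing `ℓ`-labeled half-edge in the cyclic order. -/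
def posOut {g : ℕ} (ℓ : Fin (2 * g)) : ℕ :=
  if (ℓ : ℕ) % 2 = 0 then 2 * (ℓ : ℕ) else 2 * (ℓ : ℕ) + 1

/-- Position of the incoming `ℓ`-labeled half-edge in the cyclic order. -/
def posIn {g : ℕ} (ℓ : Fin (2 * g)) : ℕ :=
  if (ℓ : ℕ) % 2 = 0 then 2 * (ℓ : ℕ) + 2 else 2 * (ℓ : ℕ) - 1

/-- The position of the half-edge through which a traversal of a dart with signed
letter `s` *arrives* at its terminal vertex. -/
def posArr {g : ℕ} (s : Letter g) : ℕ := if s.2 then posIn s.1 else posOut s.1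

/-- The position of the half-edge through which a traversal of a dart with signed
letter `s` *leaves* its initial vertex. -/
def posLv {g : ℕ} (s : Letter g) : ℕ := if s.2 then posOut s.1 else posIn s.1

/-- The number of half-edges strictly between the arrival half-edge of `s` and the
departure half-edge of `t`, in the clockwise cyclic order of the `4g` half-edges
around a vertex. -/
def gapN {g : ℕ} (s t : Letter g) : ℕ := (posLv t + 4 * g - (posArr s + 1)) % (4 * g)

/-! ### Combinatorial complexes -/

/-- A combinatorial at-most-2-dimensional CW-complex with directed edges labeled by
the generators of `Γ_g`, and 2-cells recorded by their boundary walks (lists of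
darts, i.e. edges with a direction of traversal). -/
structure Complex (g : ℕ) where
  V : Type
  E : Type
  F : Type
  src : E → V
  dst : E → V
  lab : E → Fin (2 * g)
  bdry : F → List (E × Bool)

namespace Complex

variable {g : ℕ} (Y : Complex g)

/-- Darts: edges together with a direction of traversal (`true` = forward). -/
abbrev D := Y.E × Bool

/-- The initial vertex of a dart. -/
def dTail (d : Y.D) : Y.V := if d.2 then Y.src d.1 else Y.dst d.1

/-- The terminal vertex of a dart. -/
def dHead (d : Y.D) : Y.V := if d.2 then Y.dst d.1 else Y.src d.1

/-- The reversal of a dart. -/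
def dRev (d : Y.D) : Y.D := (d.1, !d.2)

/-- The signed letter read by a dart. -/
def dLet (d : Y.D) : Letter g := (Y.lab d.1, d.2)

/-- The word read along a list of darts. -/
def wordOf (l : List Y.D) : List (Letter g) := l.map Y.dLet

/-- The reversed walk. -/
def revW (l : List Y.D) : List Y.D := (l.map Y.dRev).reverse

/-- `WalkFrom u v l` : `l` is a walk (edge-path) from `u` to `v`. -/
inductive WalkFrom : Y.V → Y.V → List Y.D → Prop
  | nil (v : Y.V) : WalkFrom v v []
  | cons (d : Y.D) {v : Y.V} {l : List Y.D} :
      WalkFrom (Y.dHead d) v l → WalkFrom (Y.dTail d) v (d :: l)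

/-- All darts of `l` use edges from the set `sE`. -/
def InSet (sE : Set Y.E) (l : List Y.D) : Prop := ∀ d ∈ l, d.1 ∈ sE

/-- Two darts are adjacent (can be traversed consecutively). -/
def adj (d d' : Y.D) : Prop := Y.dHead d = Y.dTail d'

/-- A nonempty closed walk. -/
def IsCycle (c : List Y.D) : Prop := c ≠ [] ∧ ∃ v, Y.WalkFrom v v c

/-- **P1**: at most one incoming and at most one outgoing `ℓ`-labeled edge at every
vertex, for every label `ℓ`. -/
def P1 : Prop :=
  (∀ e e' : Y.E, Y.src e = Y.src e' → Y.lab e = Y.lab e' → e = e') ∧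
  (∀ e e' : Y.E, Y.dst e = Y.dst e' → Y.lab e = Y.lab e' → e = e')

/-- **P2**: every walk reading a word equal to `1` in `Γ_g` is closed. -/
def P2 : Prop :=
  ∀ (u v : Y.V) (l : List Y.D), Y.WalkFrom u v l → wordG (Y.wordOf l) = 1 → u = v

/-- **P3**: every 2-cell is glued along a closed walk reading the relator
`[a₁,b₁]⋯[a_g,b_g]`, and every such closed walk bounds at most one 2-cell. -/
def P3 : Prop :=
  (∀ f : Y.F, (∃ v, Y.WalkFrom v v (Y.bdry f)) ∧ Y.wordOf (Y.bdry f) = relatorWord g) ∧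
  Function.Injective Y.bdry

/-- A combinatorial covering space of `Σ_g`: every vertex has exactly one outgoing
and one incoming edge of each label, every walk reading the relator is closed, and
every closed walk reading the relator bounds exactly one `4g`-gon. -/
def IsCovering : Prop :=
  Y.P1 ∧ Y.P3 ∧
  (∀ (v : Y.V) (ℓ : Fin (2 * g)), ∃ e, Y.src e = v ∧ Y.lab e = ℓ) ∧
  (∀ (v : Y.V) (ℓ : Fin (2 * g)), ∃ e, Y.dst e = v ∧ Y.lab e = ℓ) ∧
  (∀ (u v : Y.V) (l : List Y.D), Y.WalkFrom u v l → Y.wordOf l = relatorWord g → u = v) ∧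
  (∀ (v : Y.V) (l : List Y.D), Y.WalkFrom v v l → Y.wordOf l = relatorWord g →
    ∃ f, Y.bdry f = l)

end Complex

/-- A morphism of labeled complexes: maps cells to cells of the same dimension and
respects sources, targets, labels and face boundaries (equivalently, commutes with
the immersions to `Σ_g`). -/
structure Hom {g : ℕ} (Y Z : Complex g) where
  mV : Y.V → Z.V
  mE : Y.E → Z.E
  mF : Y.F → Z.F
  hsrc : ∀ e, Z.src (mE e) = mV (Y.src e)
  hdst : ∀ e, Z.dst (mE e) = mV (Y.dst e)
  hlab : ∀ e, Z.lab (mE e) = Y.lab e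
  hbdry : ∀ f, Z.bdry (mF f) = (Y.bdry f).map fun d => (mE d.1, d.2)

namespace Hom

variable {g : ℕ} {Y Z : Complex g}

/-- The induced map on darts. -/
def mD (φ : Hom Y Z) (d : Y.D) : Z.D := (φ.mE d.1, d.2)

/-- Injectivity (an embedding of complexes). -/
def Inj (φ : Hom Y Z) : Prop :=
  Function.Injective φ.mV ∧ Function.Injective φ.mE ∧ Function.Injective φ.mF

end Hom

namespace Complex

variable {g : ℕ} (Y : Complex g)

/-- A tiled surface: a complex which embeds into a combinatorial covering space of
`Σ_g` (compatibly with directions and labels). -/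
def IsTiledSurface : Prop :=
  ∃ Z : Complex g, Z.IsCovering ∧ ∃ φ : Hom Y Z, φ.Inj

/-- Connectivity of a complex (any two vertices are joined by a walk). -/
def Connected : Prop := Nonempty Y.V ∧ ∀ v w : Y.V, ∃ l, Y.WalkFrom v w l

/-! ### Blocks and chains -/

/-- A block: a nonempty walk such that successive darts have no half-edges between
them (hence it reads a subword of the cyclic relator, of length at most `4g`). -/
def IsBlock (l : List Y.D) : Prop :=
  l ≠ [] ∧ l.length ≤ 4 * g ∧
  List.Chain' (fun d d' => Y.adj d d' ∧ gapN (Y.dLet d) (Y.dLet d') = 0) l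

/-- Two blocks are consecutive: concatenation is a walk and there is exactly one
half-edge between the last dart of the first and the first dart of the second. -/
def chainStep (b b' : List Y.D) : Prop :=
  ∃ d d', b.getLast? = some d ∧ b'.head? = some d' ∧ Y.adj d d' ∧
    gapN (Y.dLet d) (Y.dLet d') = 1

/-- A chain: a nonempty sequence of consecutive blocks. -/
def IsChain (bs : List (List Y.D)) : Prop :=
  bs ≠ [] ∧ (∀ b ∈ bs, Y.IsBlock b) ∧ List.Chain' Y.chainStep bs

/-- A cyclic chain: a chain whose blocks pave an entire cycle. -/
def IsCyclicChain (bs : List (List Y.D)) : Prop :=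
  Y.IsChain bs ∧ ∃ b b', bs.getLast? = some b ∧ bs.head? = some b' ∧ Y.chainStep b b'

/-- A long chain: a chain of consecutive blocks of lengths `2g, 2g−1, …, 2g−1, 2g`. -/
def IsLongChain (bs : List (List Y.D)) : Prop :=
  Y.IsChain bs ∧ ∃ k, bs.map List.length = 2 * g :: (List.replicate k (2 * g - 1) ++ [2 * g])

/-- A half-chain: a cyclic chain all of whose blocks have length `2g − 1`. -/
def IsHalfChain (bs : List (List Y.D)) : Prop :=
  Y.IsCyclicChain bs ∧ ∀ b ∈ bs, b.length = 2 * g - 1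

/-! ### Boundary cycles of the thick version (relative to sets of present edges and
faces), via the ribbon structure -/

/-- `nextD sE d d'`: among darts (with edge in `sE`) leaving the head of `d`, the
dart `d'` is the first one in clockwise order after the arrival half-edge of `d`.
This is the successor map whose orbits trace the boundary components of the thick
version of the ribbon graph. -/
def nextD (sE : Set Y.E) (d d' : Y.D) : Prop :=
  d'.1 ∈ sE ∧ Y.adj d d' ∧
  ∀ d'' : Y.D, d''.1 ∈ sE → Y.adj d d'' →
    gapN (Y.dLet d) (Y.dLet d') ≤ gapN (Y.dLet d) (Y.dLet d'')

/-- The corner between the consecutive darts `d, d'` is filled by a face from `sF`. -/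
def faceStep (sF : Set Y.F) (d d' : Y.D) : Prop :=
  ∃ f ∈ sF, [d, d'] <:+: (Y.bdry f ++ Y.bdry f)

/-- One step along the boundary of the thick version. -/
def bStep (sE : Set Y.E) (sF : Set Y.F) (d d' : Y.D) : Prop :=
  d.1 ∈ sE ∧ Y.nextD sE d d' ∧ ¬ Y.faceStep sF d d'

/-- A (finite segment of a) boundary cycle of the thick version. -/
def BPath (sE : Set Y.E) (sF : Set Y.F) (l : List Y.D) : Prop :=
  l ≠ [] ∧ Y.InSet sE l ∧ List.Chain' (Y.bStep sE sF) l

/-- A (finite) boundary cycle of the thick version. -/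
def BCycle (sE : Set Y.E) (sF : Set Y.F) (l : List Y.D) : Prop :=
  Y.BPath sE sF l ∧ ∃ d d', l.getLast? = some d ∧ l.head? = some d' ∧ Y.bStep sE sF d d'

/-- A dart lying on the boundary of the thick version. -/
def IsBDart (sE : Set Y.E) (sF : Set Y.F) (d : Y.D) : Prop :=
  d.1 ∈ sE ∧ ∃ d', Y.nextD sE d d' ∧ ¬ Y.faceStep sF d d'

/-- Boundary reduced: no boundary cycle contains a long block (length `≥ 2g+1`) or
a long chain. -/
def BoundaryReduced (sE : Set Y.E) (sF : Set Y.F) : Prop :=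
  (∀ l, Y.BPath sE sF l → ¬ (Y.IsBlock l ∧ 2 * g + 1 ≤ l.length)) ∧
  (∀ bs, Y.IsLongChain bs → ¬ Y.BPath sE sF bs.flatten)

/-- Strongly boundary reduced: no boundary cycle contains a half-block (length
exactly `2g`) or a half-chain. -/
def StronglyBoundaryReduced (sE : Set Y.E) (sF : Set Y.F) : Prop :=
  (∀ l, Y.BPath sE sF l → ¬ (Y.IsBlock l ∧ l.length = 2 * g)) ∧
  (∀ bs, Y.IsHalfChain bs → ¬ Y.BCycle sE sF bs.flatten)

/-! ### Combinatorial homotopy of walks -/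

/-- A closed walk traversing the boundary of a face from `sF` (in either direction,
starting anywhere). -/
def faceLoop (sF : Set Y.F) (b : List Y.D) : Prop :=
  ∃ f ∈ sF, ∃ n, b = (Y.bdry f).rotate n ∨ b = Y.revW ((Y.bdry f).rotate n)

/-- Elementary homotopy move: insertion of a backtrack or of a face boundary. -/
def elemMove (sE : Set Y.E) (sF : Set Y.F) (l l' : List Y.D) : Prop :=
  (∃ (l₁ l₂ : List Y.D) (d : Y.D), d.1 ∈ sE ∧ l = l₁ ++ l₂ ∧ l' = l₁ ++ d :: Y.dRev d :: l₂) ∨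
  (∃ l₁ l₂ b, Y.faceLoop sF b ∧ l = l₁ ++ l₂ ∧ l' = l₁ ++ b ++ l₂)

/-- Homotopy (rel endpoints) of walks from `u` to `v`, inside the subcomplex with
edge set `sE` and face set `sF`. -/
def Homotopic (sE : Set Y.E) (sF : Set Y.F) (u v : Y.V) (c c' : List Y.D) : Prop :=
  Relation.EqvGen
    (fun a b =>
      Y.WalkFrom u v a ∧ Y.WalkFrom u v b ∧ Y.InSet sE a ∧ Y.InSet sE b ∧
        (Y.elemMove sE sF a b ∨ Y.elemMove sE sF b a)) c c'

/-- A closed walk which is null-homotopic. -/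
def NullHomotopic (sE : Set Y.E) (sF : Set Y.F) (c : List Y.D) : Prop :=
  ∃ v, Y.WalkFrom v v c ∧ Y.Homotopic sE sF v v c []

/-- An essential cycle: a nonempty closed walk which is not null-homotopic. -/
def Essential (sE : Set Y.E) (sF : Set Y.F) (c : List Y.D) : Prop :=
  Y.IsCycle c ∧ Y.InSet sE c ∧ ¬ Y.NullHomotopic sE sF c

/-- Free homotopy of closed walks. -/
def FreelyHomotopic (sE : Set Y.E) (sF : Set Y.F) (c c' : List Y.D) : Prop :=
  ∃ u v q, Y.WalkFrom u u c ∧ Y.WalkFrom v v c' ∧ Y.WalkFrom u v q ∧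
    Y.InSet sE q ∧ Y.InSet sE c ∧ Y.InSet sE c' ∧
    Y.Homotopic sE sF u u c (q ++ c' ++ Y.revW q)

/-- `c` is a shortest representative of its free homotopy class. -/
def ShortestRep (sE : Set Y.E) (sF : Set Y.F) (c : List Y.D) : Prop :=
  ∀ c', Y.FreelyHomotopic sE sF c c' → c.length ≤ c'.length

end Complex

/-- `s` occurs as a contiguous subword of the cyclic word `c`. -/
def cycContains {α : Type*} (c s : List α) : Prop :=
  s ≠ [] ∧ s.length ≤ c.length ∧ s <:+: (c ++ c)

namespace Complex

variable {g : ℕ} (Y : Complex g)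

/-- The cycle `c` contains no long block and no long chain. -/
def NoLongBlockOrChainCyc (c : List Y.D) : Prop :=
  (∀ s, cycContains c s → ¬ (Y.IsBlock s ∧ 2 * g + 1 ≤ s.length)) ∧
  (∀ bs, Y.IsLongChain bs → ¬ cycContains c bs.flatten)

/-- A (cyclically) non-backtracking cycle. -/
def NonBacktrackingCyc (c : List Y.D) : Prop :=
  ¬ ∃ d : Y.D, cycContains c [d, Y.dRev d]

/-- A cycle which is essential and a shortest representative of its
free homotopy class. -/
def GoodCycle (c : List Y.D) : Prop :=
  Y.IsCycle c ∧ Y.Essential Set.univ Set.univ c ∧ Y.ShortestRep Set.univ Set.univ c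

/-! ### Cells and components of complements -/

/-- The cells of a complex. -/
def Cell := Y.V ⊕ Y.E ⊕ Y.F

def vCell (v : Y.V) : Y.Cell := Sum.inl v
def eCell (e : Y.E) : Y.Cell := Sum.inr (Sum.inl e)
def fCell (f : Y.F) : Y.Cell := Sum.inr (Sum.inr f)

/-- Basic incidence of (open) cells. -/
def inc0 : Y.Cell → Y.Cell → Prop := fun c c' =>
  match c, c' with
  | Sum.inl v, Sum.inr (Sum.inl e) => Y.src e = v ∨ Y.dst e = v
  | Sum.inl v, Sum.inr (Sum.inr f) => ∃ d ∈ Y.bdry f, Y.dTail d = v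
  | Sum.inr (Sum.inl e), Sum.inr (Sum.inr f) => ∃ b, (e, b) ∈ Y.bdry f
  | _, _ => False

/-- Symmetrized incidence of cells. -/
def incid (c c' : Y.Cell) : Prop := Y.inc0 c c' ∨ Y.inc0 c' c

end Complex

/-- A triple of subsets of the cells of a complex `Y` (a prospective subcomplex). -/
structure SubC {g : ℕ} (Y : Complex g) where
  sV : Set Y.V
  sE : Set Y.E
  sF : Set Y.F

namespace SubC

variable {g : ℕ} {Y : Complex g}

/-- `S` is an actual subcomplex: closed under taking boundaries of cells. -/
def IsSub (S : SubC Y) : Prop :=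
  (∀ e ∈ S.sE, Y.src e ∈ S.sV ∧ Y.dst e ∈ S.sV) ∧
  (∀ f ∈ S.sF, ∀ d ∈ Y.bdry f, d.1 ∈ S.sE)

/-- Containment of subcomplexes. -/
def le (S T : SubC Y) : Prop := S.sV ⊆ T.sV ∧ S.sE ⊆ T.sE ∧ S.sF ⊆ T.sF

/-- Compactness: finitely many cells. -/
def Compact (S : SubC Y) : Prop := S.sV.Finite ∧ S.sE.Finite ∧ S.sF.Finite

/-- Connectivity of the subcomplex. -/
def Connected (S : SubC Y) : Prop :=
  S.sV.Nonempty ∧ ∀ v ∈ S.sV, ∀ w ∈ S.sV, ∃ l, Y.WalkFrom v w l ∧ Y.InSet S.sE l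

/-- Image of a subcomplex under a morphism. -/
def image {Z : Complex g} (φ : Hom Y Z) (S : SubC Y) : SubC Z :=
  ⟨φ.mV '' S.sV, φ.mE '' S.sE, φ.mF '' S.sF⟩

end SubC

/-- The whole complex, as a subcomplex of itself. -/
def fullSub {g : ℕ} (Y : Complex g) : SubC Y := ⟨Set.univ, Set.univ, Set.univ⟩

namespace Complex

variable {g : ℕ} (Y : Complex g)

/-- Membership of a cell in a subcomplex. -/
def inSub (S : SubC Y) : Y.Cell → Prop := fun c =>
  match c with
  | Sum.inl v => v ∈ S.sV
  | Sum.inr (Sum.inl e) => e ∈ S.sE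
  | Sum.inr (Sum.inr f) => f ∈ S.sF

/-- Reachability of cells through the open complement of the subcomplex `S`
(= lying in the same connected component of the complement). -/
def reachS (S : SubC Y) (c c' : Y.Cell) : Prop :=
  Relation.ReflTransGen (fun a b => Y.incid a b ∧ ¬ Y.inSub S a ∧ ¬ Y.inSub S b) c c'

end Complex

/-- The closure (as a subcomplex) of the connected component of the cell `c₀` in the
complement of the subcomplex `S`. -/
def compCl {g : ℕ} (Y : Complex g) (S : SubC Y) (c₀ : Y.Cell) : SubC Y :=
  let cF : Set Y.F := {f | Y.reachS S c₀ (Y.fCell f)}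
  let cE : Set Y.E :=
    {e | Y.reachS S c₀ (Y.eCell e)} ∪ {e | ∃ f ∈ cF, ∃ b, (e, b) ∈ Y.bdry f}
  let cV : Set Y.V :=
    {v | Y.reachS S c₀ (Y.vCell v)} ∪ {v | ∃ e ∈ cE, Y.src e = v ∨ Y.dst e = v}
  ⟨cV, cE, cF⟩

/-- The subcomplex has exactly one boundary cycle (which covers all boundary darts). -/
def OneBdry {g : ℕ} (Y : Complex g) (S : SubC Y) : Prop :=
  ∃ δ, Y.BCycle S.sE S.sF δ ∧ ∀ d, Y.IsBDart S.sE S.sF d → d ∈ δ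

/-- The subcomplex has exactly two (disjoint) boundary cycles, covering all
boundary darts. -/
def TwoBdry {g : ℕ} (Y : Complex g) (S : SubC Y) : Prop :=
  ∃ δ₁ δ₂, Y.BCycle S.sE S.sF δ₁ ∧ Y.BCycle S.sE S.sF δ₂ ∧ δ₁.Disjoint δ₂ ∧
    ∀ d, Y.IsBDart S.sE S.sF d → d ∈ δ₁ ∨ d ∈ δ₂

/-- The boundary-reduced closure of `S` inside `Y`: the intersection of all
intermediate boundary reduced subcomplexes. -/
def BRcl {g : ℕ} (Y : Complex g) (S : SubC Y) : SubC Y where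
  sV := ⋂ T ∈ {T : SubC Y | T.IsSub ∧ S.le T ∧ Y.BoundaryReduced T.sE T.sF}, T.sV
  sE := ⋂ T ∈ {T : SubC Y | T.IsSub ∧ S.le T ∧ Y.BoundaryReduced T.sE T.sF}, T.sE
  sF := ⋂ T ∈ {T : SubC Y | T.IsSub ∧ S.le T ∧ Y.BoundaryReduced T.sE T.sF}, T.sF

/-- The strongly-boundary-reduced closure of `S` inside `Y`. -/
def SBRcl {g : ℕ} (Y : Complex g) (S : SubC Y) : SubC Y where
  sV := ⋂ T ∈ {T : SubC Y | T.IsSub ∧ S.le T ∧ Y.StronglyBoundaryReduced T.sE T.sF}, T.sV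
  sE := ⋂ T ∈ {T : SubC Y | T.IsSub ∧ S.le T ∧ Y.StronglyBoundaryReduced T.sE T.sF}, T.sE
  sF := ⋂ T ∈ {T : SubC Y | T.IsSub ∧ S.le T ∧ Y.StronglyBoundaryReduced T.sE T.sF}, T.sF

/-- An isomorphism between the subcomplex `S` of `Y` and the subcomplex `T` of `Z`. -/
structure SubEquiv {g : ℕ} (Y : Complex g) (S : SubC Y) (Z : Complex g) (T : SubC Z) where
  fV : Y.V → Z.V
  fE : Y.E → Z.E
  fF : Y.F → Z.F
  bijV : Set.BijOn fV S.sV T.sV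
  bijE : Set.BijOn fE S.sE T.sE
  bijF : Set.BijOn fF S.sF T.sF
  hsrc : ∀ e ∈ S.sE, Z.src (fE e) = fV (Y.src e)
  hdst : ∀ e ∈ S.sE, Z.dst (fE e) = fV (Y.dst e)
  hlab : ∀ e ∈ S.sE, Z.lab (fE e) = Y.lab e
  hbdry : ∀ f ∈ S.sF, Z.bdry (fF f) = (Y.bdry f).map fun d => (fE d.1, d.2)

/-- `FunnelComponent Y S c₀`: the connected component of the cell `c₀` in the
complement of the subcomplex `S` is a twice-punctured sphere with one funnel and
one fake-puncture.  Rendered combinatorially: the component contains infinitely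
many `4g`-gons (the funnel); there is a boundary cycle `δ` of `S` adjacent to the
component, it is unique (one fake-puncture), and every closed walk inside the
closure of the component is freely homotopic there to a power of `δ` or of its
inverse (so the closure is a half-open annulus bounded by `δ`). -/
def FunnelComponent {g : ℕ} (Y : Complex g) (S : SubC Y) (c₀ : Y.Cell) : Prop :=
  {f : Y.F | Y.reachS S c₀ (Y.fCell f)}.Infinite ∧
  ∃ δ : List Y.D, Y.BCycle S.sE S.sF δ ∧
    (∃ d ∈ δ, ∃ c', Y.incid (Y.eCell d.1) c' ∧ Y.reachS S c₀ c') ∧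
    (∀ δ', Y.BCycle S.sE S.sF δ' →
      (∃ d ∈ δ', ∃ c', Y.incid (Y.eCell d.1) c' ∧ Y.reachS S c₀ c') →
      ∃ n, δ' = δ.rotate n) ∧
    (∀ (v : Y.V) (l : List Y.D), Y.WalkFrom v v l →
      Y.InSet ({e | Y.reachS S c₀ (Y.eCell e)} ∪ {e | ∃ b, (e, b) ∈ δ}) l →
      ∃ n,
        Y.FreelyHomotopic ({e | Y.reachS S c₀ (Y.eCell e)} ∪ {e | ∃ b, (e, b) ∈ δ})
          {f | Y.reachS S c₀ (Y.fCell f)} l ((List.replicate n δ).flatten) ∨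
        Y.FreelyHomotopic ({e | Y.reachS S c₀ (Y.eCell e)} ∪ {e | ∃ b, (e, b) ∈ δ})
          {f | Y.reachS S c₀ (Y.fCell f)} l ((List.replicate n (Y.revW δ)).flatten))

/-- `Y` contains a funnel: an essential cycle `δ` of `Y` cutting off an infinite
region of `Y` which is attached to the rest of `Y` only along `δ`, contains no
boundary of `Y`, and is a half-open annulus (every loop inside is freely homotopic
to a power of `δ`); i.e. an end of `Y` which is a puncture of the ambient covering. -/
def HasFunnel {g : ℕ} (Y : Complex g) : Prop :=
  ∃ (δ : List Y.D) (sE : Set Y.E) (sF : Set Y.F),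
    Y.IsCycle δ ∧ Y.Essential Set.univ Set.univ δ ∧
    (∀ d ∈ δ, d.1 ∉ sE) ∧ sE.Nonempty ∧ sF.Infinite ∧
    (∀ f ∈ sF, ∀ d ∈ Y.bdry f, d.1 ∈ sE ∨ ∃ b, (d.1, b) ∈ δ) ∧
    (∀ f : Y.F, (∃ d ∈ Y.bdry f, d.1 ∈ sE) → f ∈ sF) ∧
    (∀ d : Y.D, d.1 ∈ sE → ¬ Y.IsBDart Set.univ Set.univ d) ∧
    (∀ v : Y.V, (∃ e ∈ sE, Y.src e = v ∨ Y.dst e = v) → (∀ d ∈ δ, Y.dTail d ≠ v) →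
      ∀ e' : Y.E, (Y.src e' = v ∨ Y.dst e' = v) → e' ∈ sE) ∧
    (∀ (v : Y.V) (l : List Y.D), Y.WalkFrom v v l →
      Y.InSet (sE ∪ {e | ∃ b, (e, b) ∈ δ}) l →
      ∃ n,
        Y.FreelyHomotopic (sE ∪ {e | ∃ b, (e, b) ∈ δ}) sF l
          ((List.replicate n δ).flatten) ∨
        Y.FreelyHomotopic (sE ∪ {e | ∃ b, (e, b) ∈ δ}) sF l
          ((List.replicate n (Y.revW δ)).flatten))

/-- The fundamental group of `Y` is cyclic: some closed walk `c` generates all free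
homotopy classes of loops.  (For a connected surface this is *equivalent to NOT
having genus ≥ 1 or at least 3 boundary components/punctures*.) -/
def CyclicPi1 {g : ℕ} (Y : Complex g) : Prop :=
  ∃ c : List Y.D, ∀ (v : Y.V) (l : List Y.D), Y.WalkFrom v v l →
    ∃ n,
      Y.FreelyHomotopic Set.univ Set.univ l ((List.replicate n c).flatten) ∨
      Y.FreelyHomotopic Set.univ Set.univ l ((List.replicate n (Y.revW c)).flatten)

/-! ### The covering space `J\~Σ_g` and the core surface of `J` -/

/-- Right cosets `Jx` of `J` in `Γ_g` — the vertices (and faces) of `J\~Σ_g`. -/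
abbrev Cos (g : ℕ) (J : Subgroup (Gamma g)) := Quotient (QuotientGroup.rightRel J)

/-- The coset `Jx`. -/
def mkCos (g : ℕ) (J : Subgroup (Gamma g)) (x : Gamma g) : Cos g J :=
  Quotient.mk _ x

/-- Right multiplication on right cosets. -/
def rmul (g : ℕ) (J : Subgroup (Gamma g)) (x : Gamma g) : Cos g J → Cos g J :=
  Quotient.map (· * x) (by
    intro a b hab
    have h1 : b * a⁻¹ ∈ J := QuotientGroup.rightRel_apply.mp hab
    refine QuotientGroup.rightRel_apply.mpr ?_
    have h2 : b * x * (a * x)⁻¹ = b * a⁻¹ := by group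
    rw [h2]; exact h1)

/-- The walk in `J\~Σ_g` starting at a vertex and reading a given word. -/
def relWalk (g : ℕ) (J : Subgroup (Gamma g)) :
    Cos g J → List (Letter g) → List ((Cos g J × Fin (2 * g)) × Bool)
  | _, [] => []
  | v, (ℓ, true) :: w =>
      ((v, ℓ), true) :: relWalk g J (rmul g J (PresentedGroup.of ℓ) v) w
  | v, (ℓ, false) :: w =>
      ((rmul g J (PresentedGroup.of ℓ)⁻¹ v, ℓ), false) ::
        relWalk g J (rmul g J (PresentedGroup.of ℓ)⁻¹ v) w

/-- The covering space `Υ = J\~Σ_g` of `Σ_g` corresponding to the subgroup `J`,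
with the CW-structure pulled back from `Σ_g`: vertices and `4g`-gons are the right
cosets of `J`, and each vertex carries one outgoing edge per label. -/
def cover (g : ℕ) (J : Subgroup (Gamma g)) : Complex g where
  V := Cos g J
  E := Cos g J × Fin (2 * g)
  F := Cos g J
  src e := e.1
  dst e := rmul g J (PresentedGroup.of e.2) e.1
  lab e := e.2
  bdry v := relWalk g J v (relatorWord g)

/-- The map `J₁\~Σ_g → J₂\~Σ_g` on vertices, for `J₁ ≤ J₂`. -/
def coverMapV {g : ℕ} {J₁ J₂ : Subgroup (Gamma g)} (h : J₁ ≤ J₂) :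
    Cos g J₁ → Cos g J₂ :=
  Quotient.map id (by
    intro a b hab
    have h1 : b * a⁻¹ ∈ J₁ := QuotientGroup.rightRel_apply.mp hab
    exact QuotientGroup.rightRel_apply.mpr (h h1))

/-- The natural covering morphism on edges. -/
def coverMapE {g : ℕ} {J₁ J₂ : Subgroup (Gamma g)} (h : J₁ ≤ J₂)
    (e : (cover g J₁).E) : (cover g J₂).E :=
  (coverMapV h e.1, e.2)

/-- The natural covering morphism on darts. -/
def coverMapD {g : ℕ} {J₁ J₂ : Subgroup (Gamma g)} (h : J₁ ≤ J₂)
    (d : (cover g J₁).D) : (cover g J₂).D :=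
  (coverMapE h d.1, d.2)

/-- The cycle `c` in `J\~Σ_g` represents the conjugacy class of `γ` in `J`
(conjugacy classes in `J` ↔ free homotopy classes of essential loops in `J\~Σ_g`). -/
def RepCls {g : ℕ} (J : Subgroup (Gamma g)) (c : List ((cover g J).D))
    (γ : Gamma g) : Prop :=
  ∃ x j : Gamma g, j ∈ J ∧
    (cover g J).WalkFrom (mkCos g J x) (mkCos g J x) c ∧
    x * wordG ((cover g J).wordOf c) * x⁻¹ = j * γ * j⁻¹

/-- Step (i) of the definition of the core surface: the edges lying on some
shortest representative cycle of an essential free homotopy class. -/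
def coreE1 (g : ℕ) (J : Subgroup (Gamma g)) : Set (cover g J).E :=
  {e | ∃ c, (cover g J).GoodCycle c ∧ ∃ b, (e, b) ∈ c}

/-- The vertices of step (i) of the definition of the core surface. -/
def coreV1 (g : ℕ) (J : Subgroup (Gamma g)) : Set (cover g J).V :=
  {v | ∃ e ∈ coreE1 g J, (cover g J).src e = v ∨ (cover g J).dst e = v}

/-- Step (i) of the definition of the core surface, as a subcomplex of `J\~Σ_g`. -/
def coreS1 (g : ℕ) (J : Subgroup (Gamma g)) : SubC (cover g J) :=
  ⟨coreV1 g J, coreE1 g J, ∅⟩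

/-- A cell of `J\~Σ_g` lying in a connected component of the complement of step (i)
which contains only finitely many `4g`-gons. -/
def coreFin (g : ℕ) (J : Subgroup (Gamma g)) (c : (cover g J).Cell) : Prop :=
  ¬ (cover g J).inSub (coreS1 g J) c ∧
  {f : (cover g J).F | (cover g J).reachS (coreS1 g J) c ((cover g J).fCell f)}.Finite

open Classical in
/-- The core surface `Core(J)` of a subgroup `J ≤ Γ_g`, as a subcomplex of
`Υ = J\~Σ_g`: (i) the union of all shortest representative cycles of essential
free homotopy classes in `Υ`, together with (ii) all connected components of the
complement containing finitely many `4g`-gons.  For the trivial subgroup it is a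
single vertex. -/
def coreSub (g : ℕ) (J : Subgroup (Gamma g)) : SubC (cover g J) :=
  if J = ⊥ then ⟨{mkCos g J 1}, ∅, ∅⟩
  else
    ⟨coreV1 g J ∪ {v | coreFin g J ((cover g J).vCell v)},
     coreE1 g J ∪ {e | coreFin g J ((cover g J).eCell e)},
     {f | coreFin g J ((cover g J).fCell f)}⟩

namespace Complex

variable {g : ℕ} {Y : Complex g}

/-! ### Walks -/

theorem dRev_dRev (d : Y.D) : Y.dRev (Y.dRev d) = d := by
  cases d; simp [dRev]

theorem dHead_dRev (d : Y.D) : Y.dHead (Y.dRev d) = Y.dTail d := by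
  rcases d with ⟨e, b⟩; cases b <;> simp [dRev, dHead, dTail]

theorem dTail_dRev (d : Y.D) : Y.dTail (Y.dRev d) = Y.dHead d := by
  rcases d with ⟨e, b⟩; cases b <;> simp [dRev, dHead, dTail]

theorem revW_nil : Y.revW [] = [] := rfl

theorem revW_append (a b : List Y.D) : Y.revW (a ++ b) = Y.revW b ++ Y.revW a := by
  simp [revW]

theorem revW_cons (d : Y.D) (b : List Y.D) : Y.revW (d :: b) = Y.revW b ++ [Y.dRev d] := by
  simp [revW]

theorem revW_revW (a : List Y.D) : Y.revW (Y.revW a) = a := by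
  induction a with
  | nil => rfl
  | cons d a ih => rw [revW_cons, revW_append, ih, revW_cons, revW_nil, dRev_dRev]; simp

theorem length_revW (a : List Y.D) : (Y.revW a).length = a.length := by simp [revW]

theorem walk_nil {u v : Y.V} : Y.WalkFrom u v [] ↔ u = v := by
  constructor
  · intro h; cases h; rfl
  · rintro rfl; exact .nil _

theorem walk_cons {u v : Y.V} {d : Y.D} {l : List Y.D} :
    Y.WalkFrom u v (d :: l) ↔ u = Y.dTail d ∧ Y.WalkFrom (Y.dHead d) v l := by
  constructor
  · intro h; cases h with
    | cons _ h => exact ⟨rfl, h⟩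
  · rintro ⟨rfl, h⟩; exact .cons d h

theorem walk_append {u v : Y.V} {a b : List Y.D} :
    Y.WalkFrom u v (a ++ b) ↔ ∃ m, Y.WalkFrom u m a ∧ Y.WalkFrom m v b := by
  induction a generalizing u with
  | nil => simp [walk_nil]
  | cons d a ih =>
    simp only [List.cons_append, walk_cons, ih]
    constructor
    · rintro ⟨h, m, h1, h2⟩; exact ⟨m, ⟨h, h1⟩, h2⟩
    · rintro ⟨m, ⟨h, h1⟩, h2⟩; exact ⟨h, m, h1, h2⟩

theorem walk_single {u v : Y.V} {d : Y.D} :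
    Y.WalkFrom u v [d] ↔ u = Y.dTail d ∧ Y.dHead d = v := by
  rw [walk_cons, walk_nil]

theorem walk_revW {u v : Y.V} {a : List Y.D} (h : Y.WalkFrom u v a) :
    Y.WalkFrom v u (Y.revW a) := by
  induction a generalizing u with
  | nil => rw [walk_nil] at h; subst h; exact .nil _
  | cons d a ih =>
    rw [walk_cons] at h
    rw [revW_cons, walk_append]
    exact ⟨_, ih h.2, walk_single.2 ⟨(dTail_dRev d).symm, by rw [dHead_dRev, h.1]⟩⟩

theorem walk_end_unique {u v w : Y.V} {a : List Y.D} (h : Y.WalkFrom u v a)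
    (h' : Y.WalkFrom u w a) : v = w := by
  induction a generalizing u with
  | nil => rw [walk_nil] at h h'; exact h.symm.trans h'
  | cons d a ih => rw [walk_cons] at h h'; exact ih h.2 h'.2

theorem walk_chain_adj {u v : Y.V} {a : List Y.D} (h : Y.WalkFrom u v a) :
    List.IsChain Y.adj a := by
  induction a generalizing u with
  | nil => exact .nil
  | cons d a ih =>
    rw [walk_cons] at h
    cases a with
    | nil => exact .singleton _
    | cons d' a =>
      exact List.isChain_cons_cons.2 ⟨(walk_cons.1 h.2).1, ih h.2⟩

theorem inSet_univ (l : List Y.D) : Y.InSet Set.univ l := fun _ _ => Set.mem_univ _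

/-! ### Homotopies -/

/-- Abbreviation for homotopy in the whole complex. -/
abbrev Htp (Y : Complex g) (u v : Y.V) (a b : List Y.D) : Prop :=
  Y.Homotopic Set.univ Set.univ u v a b

theorem Htp.refl {u v : Y.V} (a : List Y.D) : Y.Htp u v a a := Relation.EqvGen.refl _

theorem Htp.symm {u v : Y.V} {a b : List Y.D} (h : Y.Htp u v a b) : Y.Htp u v b a :=
  Relation.EqvGen.symm _ _ h

theorem Htp.trans {u v : Y.V} {a b c : List Y.D} (h : Y.Htp u v a b) (h' : Y.Htp u v b c) :
    Y.Htp u v a c := Relation.EqvGen.trans _ _ _ h h'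

theorem elemMove_congr {a b : List Y.D} (p q : List Y.D)
    (h : Y.elemMove Set.univ Set.univ a b) :
    Y.elemMove Set.univ Set.univ (p ++ a ++ q) (p ++ b ++ q) := by
  rcases h with ⟨l₁, l₂, d, hd, rfl, rfl⟩ | ⟨l₁, l₂, b, hb, rfl, rfl⟩
  · exact Or.inl ⟨p ++ l₁, l₂ ++ q, d, hd, by simp, by simp⟩
  · exact Or.inr ⟨p ++ l₁, l₂ ++ q, b, hb, by simp, by simp⟩

theorem elemMove_rev {a b : List Y.D}
    (h : Y.elemMove Set.univ Set.univ a b) :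
    Y.elemMove Set.univ Set.univ (Y.revW a) (Y.revW b) := by
  rcases h with ⟨l₁, l₂, d, hd, rfl, rfl⟩ | ⟨l₁, l₂, b, hb, rfl, rfl⟩
  · refine Or.inl ⟨Y.revW l₂, Y.revW l₁, d, hd, by simp [revW_append], ?_⟩
    simp [revW_append, revW_cons, dRev_dRev]
  · refine Or.inr ⟨Y.revW l₂, Y.revW l₁, Y.revW b, ?_, by simp [revW_append], by
      simp [revW_append]⟩
    obtain ⟨f, hf, n, h | h⟩ := hb
    · exact ⟨f, hf, n, Or.inr (by rw [h])⟩
    · exact ⟨f, hf, n, Or.inl (by rw [h, revW_revW])⟩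

theorem Htp.congr {u v x y : Y.V} {a b p q : List Y.D} (h : Y.Htp u v a b)
    (hp : Y.WalkFrom x u p) (hq : Y.WalkFrom v y q) :
    Y.Htp x y (p ++ a ++ q) (p ++ b ++ q) := by
  induction h with
  | refl a => exact Htp.refl _
  | symm a b _ ih => exact ih.symm
  | trans a b c _ _ ih ih' => exact ih.trans ih'
  | rel a b h =>
    obtain ⟨h1, h2, _, _, h5⟩ := h
    refine Relation.EqvGen.rel _ _ ⟨?_, ?_, inSet_univ _, inSet_univ _, ?_⟩
    · exact walk_append.2 ⟨_, walk_append.2 ⟨_, hp, h1⟩, hq⟩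
    · exact walk_append.2 ⟨_, walk_append.2 ⟨_, hp, h2⟩, hq⟩
    · exact h5.imp (elemMove_congr p q) (elemMove_congr p q)

theorem Htp.rev {u v : Y.V} {a b : List Y.D} (h : Y.Htp u v a b) :
    Y.Htp v u (Y.revW a) (Y.revW b) := by
  induction h with
  | refl a => exact Htp.refl _
  | symm a b _ ih => exact ih.symm
  | trans a b c _ _ ih ih' => exact ih.trans ih'
  | rel a b h =>
    obtain ⟨h1, h2, _, _, h5⟩ := h
    exact Relation.EqvGen.rel _ _ ⟨walk_revW h1, walk_revW h2, inSet_univ _, inSet_univ _,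
      h5.imp elemMove_rev elemMove_rev⟩

theorem Htp.append {u m v : Y.V} {a a' b b' : List Y.D} (h : Y.Htp u m a a')
    (h' : Y.Htp m v b b') (ha' : Y.WalkFrom u m a') (hb : Y.WalkFrom m v b) :
    Y.Htp u v (a ++ b) (a' ++ b') := by
  have h1 := h.congr (.nil _) hb
  have h2 := h'.congr ha' (.nil _)
  simp only [List.nil_append, List.append_nil] at h1 h2
  exact h1.trans h2

theorem htp_backtrack {u v : Y.V} {a b : List Y.D} (d : Y.D)
    (ha : Y.WalkFrom u (Y.dTail d) a) (hb : Y.WalkFrom (Y.dTail d) v b) :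
    Y.Htp u v (a ++ b) (a ++ d :: Y.dRev d :: b) := by
  refine Relation.EqvGen.rel _ _ ⟨walk_append.2 ⟨_, ha, hb⟩, walk_append.2 ⟨_, ha, ?_⟩,
    inSet_univ _, inSet_univ _, Or.inl (Or.inl ⟨a, b, d, Set.mem_univ _, rfl, rfl⟩)⟩
  rw [walk_cons, walk_cons, dTail_dRev, dHead_dRev]
  exact ⟨rfl, rfl, hb⟩

theorem htp_cancel {u v : Y.V} {q : List Y.D} (hq : Y.WalkFrom u v q) :
    Y.Htp u u (q ++ Y.revW q) [] := by
  induction q generalizing u with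
  | nil => exact Htp.refl _
  | cons d q ih =>
    rw [walk_cons] at hq
    obtain ⟨rfl, hq⟩ := hq
    have h1 := (ih hq).congr (p := [d]) (q := [Y.dRev d]) (walk_single.2 ⟨rfl, rfl⟩)
      (walk_single.2 ⟨(dTail_dRev d).symm, dHead_dRev d⟩)
    have h2 := htp_backtrack (u := Y.dTail d) (v := Y.dTail d) (a := []) (b := []) d
      (.nil _) (.nil _)
    have h3 := h1.trans (by simpa using h2.symm)
    simpa [revW_cons] using h3

theorem htp_cancel' {u v : Y.V} {q : List Y.D} (hq : Y.WalkFrom u v q) :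
    Y.Htp v v (Y.revW q ++ q) [] := by
  have := htp_cancel (walk_revW hq)
  rwa [revW_revW] at this

theorem htp_face {u v : Y.V} {b r : List Y.D} (f : Y.F) (n : ℕ)
    (h : (Y.bdry f).rotate n = b ++ r) (hb : Y.WalkFrom u v b) (hr : Y.WalkFrom v u r) :
    Y.Htp u v b (Y.revW r) := by
  have h1 : Y.Htp u u [] (b ++ r) :=
    Relation.EqvGen.rel _ _ ⟨.nil _, walk_append.2 ⟨_, hb, hr⟩, inSet_univ _, inSet_univ _,
      Or.inl (Or.inr ⟨[], [], b ++ r, ⟨f, Set.mem_univ _, n, Or.inl h.symm⟩, rfl, by simp⟩)⟩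
  have h2 := h1.congr (p := []) (q := Y.revW r) (.nil _) (walk_revW hr)
  have h3 := (htp_cancel hr).congr (p := b) (q := []) hb (.nil _)
  simp only [List.nil_append, List.append_nil, List.append_assoc] at h2 h3
  exact h3.symm.trans h2.symm

/-! ### Half-edge arithmetic -/

theorem posLv_lt (t : Letter g) : posLv t < 4 * g := by
  obtain ⟨ℓ, b⟩ := t
  have := ℓ.2
  cases b <;> simp only [posLv, posIn, posOut] <;> grind

theorem posLv_inj {s t : Letter g} (h : posLv s = posLv t) : s = t := by
  obtain ⟨ℓ, b⟩ := s
  obtain ⟨m, c⟩ := t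
  have := ℓ.2
  have := m.2
  have key : (ℓ : ℕ) = m ∧ b = c := by
    cases b <;> cases c <;> simp [posLv, posIn, posOut] at h ⊢ <;> split_ifs at h <;> omega
  obtain ⟨h1, h2⟩ := key
  rw [Fin.ext h1, h2]

theorem posArr_eq (s : Letter g) : posArr s = posLv (s.1, !s.2) := by
  obtain ⟨ℓ, b⟩ := s; cases b <;> simp [posLv, posArr]

theorem posArr_lt (t : Letter g) : posArr t < 4 * g := by
  rw [posArr_eq]; exact posLv_lt _

theorem posArr_inj {s t : Letter g} (h : posArr s = posArr t) : s = t := by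
  rw [posArr_eq, posArr_eq] at h
  have := posLv_inj h
  obtain ⟨ℓ, b⟩ := s
  obtain ⟨m, c⟩ := t
  cases b <;> cases c <;> simp_all

theorem gap_cases (s t : Letter g) (k : ℕ) :
    gapN s t = k ↔ k < 4 * g ∧
      (posLv t = posArr s + 1 + k ∨ posLv t + 4 * g = posArr s + 1 + k) := by
  have h1 := posLv_lt t
  have h2 := posArr_lt s
  unfold gapN
  rcases lt_or_ge (posLv t + 4 * g - (posArr s + 1)) (4 * g) with h | h
  · rw [Nat.mod_eq_of_lt h]; omega
  · rw [Nat.mod_eq_sub_mod h, Nat.mod_eq_of_lt (by omega)]; omega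

theorem posArr_dRev (d : Y.D) : posArr (Y.dLet (Y.dRev d)) = posLv (Y.dLet d) := by
  rw [posArr_eq]; simp [dLet, dRev]

theorem posLv_dRev (d : Y.D) : posLv (Y.dLet (Y.dRev d)) = posArr (Y.dLet d) := by
  rw [posArr_eq]; simp [dLet, dRev]

/-- Consecutive darts with no half-edge between them. -/
def R (Y : Complex g) (d d' : Y.D) : Prop := Y.adj d d' ∧ gapN (Y.dLet d) (Y.dLet d') = 0

theorem dart_tail_inj (hP : Y.P1) {d d' : Y.D} (h : Y.dTail d = Y.dTail d')
    (hl : Y.dLet d = Y.dLet d') : d = d' := by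
  obtain ⟨e, b⟩ := d
  obtain ⟨e', b'⟩ := d'
  simp only [dLet, Prod.mk.injEq] at hl
  obtain ⟨h1, rfl⟩ := hl
  cases b
  · rw [hP.2 e e' (by simpa [dTail] using h) h1]
  · rw [hP.1 e e' (by simpa [dTail] using h) h1]

theorem dart_head_inj (hP : Y.P1) {d d' : Y.D} (h : Y.dHead d = Y.dHead d')
    (hl : Y.dLet d = Y.dLet d') : d = d' := by
  obtain ⟨e, b⟩ := d
  obtain ⟨e', b'⟩ := d'
  simp only [dLet, Prod.mk.injEq] at hl
  obtain ⟨h1, rfl⟩ := hl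
  cases b
  · rw [hP.1 e e' (by simpa [dHead] using h) h1]
  · rw [hP.2 e e' (by simpa [dHead] using h) h1]

theorem R_right (hP : Y.P1) {d x y : Y.D} (h : Y.R d x) (h' : Y.R d y) : x = y := by
  refine dart_tail_inj hP (h.1.symm.trans h'.1) (posLv_inj ?_)
  have h1 := (gap_cases _ _ _).1 h.2
  have h2 := (gap_cases _ _ _).1 h'.2
  have := posLv_lt (Y.dLet x)
  have := posLv_lt (Y.dLet y)
  omega

theorem R_left (hP : Y.P1) {d x y : Y.D} (h : Y.R x d) (h' : Y.R y d) : x = y := by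
  refine dart_head_inj hP (Eq.trans h.1 h'.1.symm) (posArr_inj ?_)
  have h1 := (gap_cases _ _ _).1 h.2
  have h2 := (gap_cases _ _ _).1 h'.2
  have := posArr_lt (Y.dLet x)
  have := posArr_lt (Y.dLet y)
  omega

/-! ### Faces -/

theorem relGap (p q : Fin (4 * g)) (h : (q : ℕ) = p + 1 ∨ ((q : ℕ) = 0 ∧ (p : ℕ) + 1 = 4 * g)) :
    gapN (relLabel g p, relSign g p) (relLabel g q, relSign g q) = 0 := by
  have hp := p.2
  have hq := q.2
  rw [gap_cases]
  refine ⟨by omega, ?_⟩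
  have e1 : posArr (relLabel g p, relSign g p) =
      if (p : ℕ) % 4 = 0 then (p : ℕ) + 2 else if (p : ℕ) % 4 = 1 then (p : ℕ)
        else if (p : ℕ) % 4 = 2 then (p : ℕ) - 2 else (p : ℕ) := by
    have hl : (relLabel g p : ℕ) = 2 * ((p : ℕ) / 4) + ((p : ℕ) % 4) % 2 := rfl
    generalize relLabel g p = ℓ at hl
    simp only [posArr, posIn, posOut, relSign, decide_eq_true_eq]
    split_ifs <;> omega
  have e2 : posLv (relLabel g q, relSign g q) =
      if (q : ℕ) % 4 = 0 then (q : ℕ) else if (q : ℕ) % 4 = 1 then (q : ℕ) + 2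
        else if (q : ℕ) % 4 = 2 then (q : ℕ) else (q : ℕ) - 2 := by
    have hl : (relLabel g q : ℕ) = 2 * ((q : ℕ) / 4) + ((q : ℕ) % 4) % 2 := rfl
    generalize relLabel g q = ℓ at hl
    simp only [posLv, posIn, posOut, relSign, decide_eq_true_eq]
    split_ifs <;> omega
  rw [e1, e2]
  split_ifs <;> omega

theorem bdry_length (hP : Y.P3) (f : Y.F) : (Y.bdry f).length = 4 * g := by
  have := congrArg List.length (hP.1 f).2
  simpa [wordOf, relatorWord] using this

theorem bdry_let (hP : Y.P3) (f : Y.F) (i : ℕ) (hi : i < (Y.bdry f).length) (hi' : i < 4 * g) :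
    Y.dLet (Y.bdry f)[i] = (relLabel g ⟨i, hi'⟩, relSign g ⟨i, hi'⟩) := by
  have h := (hP.1 f).2
  have h2 : (Y.wordOf (Y.bdry f))[i]? = (relatorWord g)[i]? := by rw [h]
  simp [wordOf, relatorWord, hi, hi'] at h2
  simpa using h2

/-- The cyclic sequence of boundary darts of a face. -/
theorem bdry_R (hP : Y.P3) (f : Y.F) (i j : ℕ) (hi : i < (Y.bdry f).length)
    (hj : j < (Y.bdry f).length) (h : j = i + 1 ∨ (j = 0 ∧ i + 1 = 4 * g)) :
    Y.R (Y.bdry f)[i] (Y.bdry f)[j] := by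
  have hl := bdry_length hP f
  refine ⟨?_, ?_⟩
  · obtain ⟨v, hv⟩ := (hP.1 f).1
    have hvv : Y.WalkFrom v v (Y.bdry f ++ Y.bdry f) := walk_append.2 ⟨v, hv, hv⟩
    have hc := List.isChain_iff_getElem.1 (walk_chain_adj hvv)
    have := hc i (by simp; omega)
    rcases h with h | ⟨h, h'⟩
    · subst h
      rwa [List.getElem_append_left hi, List.getElem_append_left hj] at this
    · subst h
      rw [List.getElem_append_left hi, List.getElem_append_right (by omega)] at this
      have e : i + 1 - (Y.bdry f).length = 0 := by omega
      simpa only [e] using this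
  · rw [bdry_let hP f i hi (by omega), bdry_let hP f j hj (by omega)]
    exact relGap _ _ h

theorem bdry_succ (hP : Y.P3) (f : Y.F) {d : Y.D} (hd : d ∈ Y.bdry f) :
    ∃ e ∈ Y.bdry f, Y.R d e := by
  obtain ⟨i, hi, rfl⟩ := List.mem_iff_getElem.1 hd
  have hl := bdry_length hP f
  rcases Nat.lt_or_ge (i + 1) (Y.bdry f).length with h | h
  · exact ⟨_, List.getElem_mem h, bdry_R hP f _ _ hi h (Or.inl rfl)⟩
  · exact ⟨_, List.getElem_mem (n := 0) (by omega), bdry_R hP f _ _ hi (by omega)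
      (Or.inr ⟨rfl, by omega⟩)⟩

theorem bdry_pred (hP : Y.P3) (f : Y.F) {d : Y.D} (hd : d ∈ Y.bdry f) :
    ∃ e ∈ Y.bdry f, Y.R e d := by
  obtain ⟨i, hi, rfl⟩ := List.mem_iff_getElem.1 hd
  have hl := bdry_length hP f
  rcases Nat.eq_zero_or_pos i with h | h
  · subst h
    exact ⟨_, List.getElem_mem (n := 4 * g - 1) (by omega), bdry_R hP f _ _ (by omega) hi
      (Or.inr ⟨rfl, by omega⟩)⟩
  · exact ⟨_, List.getElem_mem (n := i - 1) (by omega), bdry_R hP f _ _ (by omega) hi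
      (Or.inl (by omega))⟩

theorem block_mem (hP1 : Y.P1) (hP : Y.P3) (f : Y.F) {b : List Y.D} (hb : List.IsChain Y.R b)
    {d : Y.D} (hd : d ∈ b) (hf : d ∈ Y.bdry f) : ∀ x ∈ b, x ∈ Y.bdry f := by
  have hc := List.isChain_iff_getElem.1 hb
  obtain ⟨i, hi, rfl⟩ := List.mem_iff_getElem.1 hd
  have hdown : ∀ k (hk : k ≤ i), b[i - k] ∈ Y.bdry f := by
    intro k
    induction k with
    | zero => intro _; exact hf
    | succ k ih =>
      intro hk
      obtain ⟨e, he, hR⟩ := bdry_pred hP f (ih (by omega))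
      have h1 := hc (i - (k + 1)) (by omega)
      have e2 : i - (k + 1) + 1 = i - k := by omega
      simp only [e2] at h1
      rw [R_left hP1 h1 hR]; exact he
  have hup : ∀ k (hk : i + k < b.length), b[i + k] ∈ Y.bdry f := by
    intro k
    induction k with
    | zero => intro _; exact hf
    | succ k ih =>
      intro hk
      obtain ⟨e, he, hR⟩ := bdry_succ hP f (ih (by omega))
      have h1 := hc (i + k) (by omega)
      have h2 := R_right hP1 h1 hR
      simp only [← Nat.add_assoc]
      rw [h2]; exact he
  intro x hx
  obtain ⟨j, hj, rfl⟩ := List.mem_iff_getElem.1 hx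
  rcases Nat.le_total j i with h | h
  · have := hdown (i - j) (by omega)
    have e2 : i - (i - j) = j := by omega
    simpa only [e2] using this
  · have := hup (j - i) (by omega)
    have e2 : i + (j - i) = j := by omega
    simpa only [e2] using this

theorem block_rotate (hP1 : Y.P1) (hP : Y.P3) (f : Y.F) {b : List Y.D}
    (hb : List.IsChain Y.R b) (hl : b.length ≤ 4 * g)
    {d : Y.D} (hd : d ∈ b) (hf : d ∈ Y.bdry f) :
    ∃ n r, (Y.bdry f).rotate n = b ++ r := by
  have hc := List.isChain_iff_getElem.1 hb
  have hL := bdry_length hP f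
  have hpos : 0 < b.length := List.length_pos_of_mem hd
  have h0 := block_mem hP1 hP f hb hd hf _ (List.getElem_mem hpos)
  obtain ⟨m, hm, hm'⟩ := List.mem_iff_getElem.1 h0
  have key : ∀ k (hk : k < b.length),
      b[k] = (Y.bdry f)[(k + m) % (Y.bdry f).length]'(Nat.mod_lt _ (by omega)) := by
    intro k
    induction k with
    | zero =>
      intro _
      have e : (0 + m) % (Y.bdry f).length = m := by
        rw [Nat.zero_add]; exact Nat.mod_eq_of_lt hm
      simp only [e]; exact hm'.symm
    | succ k ih =>
      intro hk
      have h1 := hc k hk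
      rw [ih (by omega)] at h1
      refine R_right hP1 h1 (bdry_R hP f _ _ _ _ ?_)
      have e : (k + 1 + m) % (Y.bdry f).length =
          ((k + m) % (Y.bdry f).length + 1) % (Y.bdry f).length := by
        rw [Nat.mod_add_mod]; congr 1; omega
      have hlt : (k + m) % (Y.bdry f).length < (Y.bdry f).length := Nat.mod_lt _ (by omega)
      rw [e]
      rcases Nat.lt_or_ge ((k + m) % (Y.bdry f).length + 1) (Y.bdry f).length with h | h
      · left; exact Nat.mod_eq_of_lt h
      · right
        have h3 : (k + m) % (Y.bdry f).length + 1 = (Y.bdry f).length := by omega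
        rw [h3]
        exact ⟨Nat.mod_self _, hL⟩
  refine ⟨m, ((Y.bdry f).rotate m).drop b.length, ?_⟩
  have hb' : b = ((Y.bdry f).rotate m).take b.length := by
    refine List.ext_getElem (by simp; omega) ?_
    intro i h1 h2
    rw [List.getElem_take, List.getElem_rotate]
    exact key i h1
  have ht := List.take_append_drop b.length ((Y.bdry f).rotate m)
  rw [← hb'] at ht
  exact ht.symm

/-! ### Shortening -/

/-- Every walk reading `s` is homotopic to one shorter by at least two. -/
def Shorten (Y : Complex g) (s : List Y.D) : Prop :=
  ∀ u v, Y.WalkFrom u v s →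
    ∃ w, Y.WalkFrom u v w ∧ Y.Htp u v s w ∧ w.length + 2 ≤ s.length

theorem bStep_of_R {d d' : Y.D} (h : Y.R d d') (h' : ¬ Y.faceStep Set.univ d d') :
    Y.bStep Set.univ Set.univ d d' :=
  ⟨Set.mem_univ _, ⟨Set.mem_univ _, h.1, fun d'' _ _ => by rw [h.2]; exact Nat.zero_le _⟩, h'⟩

theorem mem_of_faceStep {d d' : Y.D} (h : Y.faceStep Set.univ d d') : ∃ f, d ∈ Y.bdry f := by
  obtain ⟨f, _, h⟩ := h
  refine ⟨f, ?_⟩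
  have := h.subset (List.mem_cons_self)
  simpa using this

/-- A block which is not a boundary path lies on a face. -/
theorem block_face {b : List Y.D} (hb : List.IsChain Y.R b)
    (hn : ¬ List.IsChain (Y.bStep Set.univ Set.univ) b) : ∃ d ∈ b, ∃ f, d ∈ Y.bdry f := by
  rw [List.isChain_iff_forall_rel_of_append_cons_cons] at hn
  push Not at hn
  obtain ⟨d, d', l₁, l₂, rfl, hn⟩ := hn
  have hR := List.isChain_iff_forall_rel_of_append_cons_cons.1 hb rfl
  refine ⟨d, by simp, ?_⟩
  by_contra hcon
  exact hn (bStep_of_R hR fun h => hcon (mem_of_faceStep h))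

theorem shorten_block (hP1 : Y.P1) (hP : Y.P3) (hbr : Y.BoundaryReduced Set.univ Set.univ)
    {b : List Y.D} (hb : Y.IsBlock b) (hl : 2 * g + 1 ≤ b.length) : Y.Shorten b := by
  have hn : ¬ List.IsChain (Y.bStep Set.univ Set.univ) b := fun h =>
    hbr.1 b ⟨hb.1, inSet_univ _, h⟩ ⟨hb, hl⟩
  obtain ⟨d, hd, f, hf⟩ := block_face hb.2.2 hn
  obtain ⟨n, r, hr⟩ := block_rotate hP1 hP f hb.2.2 hb.2.1 hd hf
  intro u v hw
  have hlen : b.length + r.length = 4 * g := by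
    have := congrArg List.length hr
    rw [List.length_rotate, bdry_length hP, List.length_append] at this
    exact this.symm
  have hclosed : ∃ m, Y.WalkFrom m m ((Y.bdry f).rotate n) := by
    obtain ⟨m, hm⟩ := (hP.1 f).1
    rw [← List.rotate_mod, List.rotate_eq_drop_append_take
      (Nat.mod_lt _ (by rw [bdry_length hP]; omega)).le]
    rw [← List.take_append_drop (n % (Y.bdry f).length) (Y.bdry f), walk_append] at hm
    obtain ⟨k, h1, h2⟩ := hm
    exact ⟨k, walk_append.2 ⟨m, h2, h1⟩⟩
  obtain ⟨m, hm⟩ := hclosed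
  rw [hr, walk_append] at hm
  obtain ⟨k, h1, h2⟩ := hm
  have hmu : m = u := by
    cases b with
    | nil => exact absurd rfl hb.1
    | cons x b => exact (walk_cons.1 h1).1.trans (walk_cons.1 hw).1.symm
  subst hmu
  have hkv : k = v := walk_end_unique h1 hw
  subst hkv
  exact ⟨Y.revW r, walk_revW h2, htp_face f n hr hw h2, by rw [length_revW]; omega⟩

/-- Tail of the length pattern of a long chain. -/
def TailShape (g : ℕ) : List ℕ → Prop
  | [] => False
  | [a] => a = 2 * g
  | a :: b :: l => a = 2 * g - 1 ∧ TailShape g (b :: l)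

theorem tailShape_iff (l : List ℕ) :
    TailShape g l ↔ ∃ k, l = List.replicate k (2 * g - 1) ++ [2 * g] := by
  induction l with
  | nil => simp [TailShape]
  | cons a l ih =>
    cases l with
    | nil =>
      constructor
      · intro h; exact ⟨0, by simpa [TailShape] using h⟩
      · rintro ⟨k, hk⟩
        cases k with
        | zero => simpa [TailShape] using hk
        | succ k => simp [List.replicate_succ] at hk
    | cons b l =>
      rw [TailShape, ih]
      constructor
      · rintro ⟨rfl, k, hk⟩; exact ⟨k + 1, by rw [hk]; simp [List.replicate_succ]⟩
      · rintro ⟨k, hk⟩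
        cases k with
        | zero => simp at hk
        | succ k =>
          simp only [List.replicate_succ, List.cons_append, List.cons.injEq] at hk
          exact ⟨hk.1, k, hk.2⟩

theorem tail_split (hg : 2 ≤ g) (xs : List ℕ) (a b : ℕ) (ys : List ℕ)
    (h : TailShape g (xs ++ a :: b :: ys)) :
    a = 2 * g - 1 ∧ TailShape g (xs ++ [a + 1]) ∧ TailShape g (b :: ys) := by
  induction xs with
  | nil => 
    simp only [List.nil_append, TailShape] at h ⊢
    exact ⟨h.1, by omega, h.2⟩
  | cons x xs ih =>
    cases xs with
    | nil =>
      simp only [List.cons_append, List.nil_append, TailShape] at h ih ⊢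
      have := ih h.2
      exact ⟨this.1, ⟨h.1, this.2.1⟩, this.2.2⟩
    | cons x' xs =>
      simp only [List.cons_append, TailShape] at h ih ⊢
      have := ih h.2
      exact ⟨this.1, ⟨h.1, this.2.1⟩, this.2.2⟩

/-- Either a single long block or a long chain. -/
def Shape (g : ℕ) : List ℕ → Prop
  | [] => False
  | [a] => 2 * g + 1 ≤ a
  | a :: b :: l => a = 2 * g ∧ TailShape g (b :: l)

theorem tail_inc {b : ℕ} {ys : List ℕ} (hg : 2 ≤ g) (h : TailShape g (b :: ys)) :
    Shape g ((b + 1) :: ys) := by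
  cases ys with
  | nil => simp only [TailShape, Shape] at h ⊢; omega
  | cons y ys => simp only [TailShape, Shape] at h ⊢; exact ⟨by omega, h.2⟩

theorem shape_split (hg : 2 ≤ g) (xs : List ℕ) (a b : ℕ) (ys : List ℕ)
    (h : Shape g (xs ++ a :: b :: ys)) :
    Shape g (xs ++ [a + 1]) ∧ Shape g ((b + 1) :: ys) := by
  cases xs with
  | nil =>
    simp only [List.nil_append, Shape] at h
    exact ⟨by simp only [List.nil_append, Shape]; omega, tail_inc hg h.2⟩
  | cons x xs =>
    have h' : x = 2 * g ∧ TailShape g (xs ++ a :: b :: ys) := by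
      cases xs with
      | nil => simpa only [List.cons_append, List.nil_append, Shape] using h
      | cons _ _ => simpa only [List.cons_append, List.nil_append, Shape] using h
    obtain ⟨_, h1, h2⟩ := tail_split hg xs a b ys h'.2
    refine ⟨?_, tail_inc hg h2⟩
    cases xs with
    | nil => simp only [List.cons_append, List.nil_append, Shape] at h1 ⊢; exact ⟨h'.1, h1⟩
    | cons _ _ => simp only [List.cons_append, Shape] at h1 ⊢; exact ⟨h'.1, h1⟩

theorem shape_pos (hg : 2 ≤ g) (l : List ℕ) (h : Shape g l) : ∀ a ∈ l, a ≤ 2 * g ∨ l = [a] := by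
  cases l with
  | nil => simp
  | cons x l =>
    cases l with
    | nil => intro a ha; right; rw [List.mem_singleton.1 ha]
    | cons y l =>
      obtain ⟨h1, h2⟩ := h
      obtain ⟨k, hk⟩ := (tailShape_iff _).1 h2
      intro a ha
      left
      rw [hk] at ha
      simp at ha
      omega

theorem exists_junction (hP1 : Y.P1) (hP : Y.P3) {bs : List (List Y.D)} (hch : Y.IsChain bs)
    (h2 : 2 ≤ bs.length)
    (hn : ¬ Y.BPath Set.univ Set.univ bs.flatten) :
    ∃ xs b b' ys d d' e, bs = xs ++ b :: b' :: ys ∧ b.getLast? = some d ∧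
      b'.head? = some d' ∧ Y.adj d d' ∧ gapN (Y.dLet d) (Y.dLet d') = 1 ∧ Y.R d e := by
  obtain ⟨hne, hbl, hst⟩ := hch
  have hst' := List.isChain_iff_forall_rel_of_append_cons_cons.1 hst
  have hnil : [] ∉ bs := fun h => (hbl _ h).1 rfl
  have hn' : ¬ List.IsChain (Y.bStep Set.univ Set.univ) bs.flatten := by
    intro h
    refine hn ⟨?_, inSet_univ _, h⟩
    cases bs with
    | nil => exact absurd rfl hne
    | cons b bs =>
      have := (hbl b (by simp)).1
      simp [this]
  rw [List.isChain_flatten hnil, not_and_or] at hn'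
  rcases hn' with hn' | hn'
  · push Not at hn'
    obtain ⟨b, hb, hbn⟩ := hn'
    have hbb := hbl b hb
    obtain ⟨x, hx, f, hf⟩ := block_face hbb.2.2 hbn
    have hall := block_mem hP1 hP f hbb.2.2 hx hf
    obtain ⟨xs, ys, rfl⟩ := List.append_of_mem hb
    cases ys with
    | cons b' ys =>
      obtain ⟨d, d', h3, h4, h5, h6⟩ := hst' rfl
      obtain ⟨e, _, he⟩ := bdry_succ hP f (hall d (List.mem_of_getLast? h3))
      exact ⟨xs, b, b', ys, d, d', e, rfl, h3, h4, h5, h6, he⟩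
    | nil =>
      rcases List.eq_nil_or_concat xs with rfl | ⟨zs, b₀, rfl⟩
      · simp at h2
      · have heq : (zs ++ [b₀]) ++ [b] = zs ++ b₀ :: b :: [] := by simp
        simp only [List.concat_eq_append] at *
        obtain ⟨d, d', h3, h4, h5, h6⟩ := hst' heq
        obtain ⟨e, _, he⟩ := bdry_pred hP f (hall d' (List.mem_of_head? h4))
        refine ⟨zs, b₀, b, [], d, d', Y.dRev e, heq, h3, h4, h5, h6, ?_, ?_⟩
        · exact (Eq.trans h5 (he.1.symm)).trans (dTail_dRev e).symm
        · have g1 := (gap_cases _ _ _).1 h6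
          have g2 := (gap_cases _ _ _).1 he.2
          rw [gap_cases, posLv_dRev]
          have := posArr_lt (Y.dLet e)
          have := posArr_lt (Y.dLet d)
          have := posLv_lt (Y.dLet d')
          omega
  · rw [List.isChain_iff_forall_rel_of_append_cons_cons] at hn'
    push Not at hn'
    obtain ⟨b, b', xs, ys, rfl, d, hd, d', hd', hnot⟩ := hn'
    obtain ⟨x, x', h3, h4, h5, h6⟩ := hst' rfl
    have e1 : x = d := by
      have := h3.symm.trans hd; simpa using this
    have e2 : x' = d' := by
      have := h4.symm.trans hd'; simpa using this
    subst e1 e2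
    by_contra hcon
    apply hnot
    refine ⟨Set.mem_univ _, ⟨Set.mem_univ _, h5, ?_⟩, ?_⟩
    · intro d'' _ hadj
      rw [h6]
      by_contra hlt
      exact hcon ⟨xs, b, b', ys, x, x', d'', rfl, h3, h4, h5, h6, hadj, by omega⟩
    · intro hfs
      obtain ⟨f, hf⟩ := mem_of_faceStep hfs
      obtain ⟨e, _, he⟩ := bdry_succ hP f hf
      exact hcon ⟨xs, b, b', ys, x, x', e, rfl, h3, h4, h5, h6, he⟩

theorem shorten_shape (hg : 2 ≤ g) (hP1 : Y.P1) (hP : Y.P3)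
    (hbr : Y.BoundaryReduced Set.univ Set.univ) (n : ℕ) :
    ∀ bs : List (List Y.D), bs.length ≤ n → Y.IsChain bs → Shape g (bs.map List.length) →
      Y.Shorten bs.flatten := by
  induction n with
  | zero =>
    intro bs hn hch _
    exact absurd (List.length_eq_zero_iff.1 (Nat.le_zero.1 hn)) hch.1
  | succ n ih =>
    intro bs hn hch hsh
    rcases Nat.lt_or_ge bs.length 2 with h2 | h2
    · have h1 : bs.length = 1 := by
        have := List.length_pos_of_ne_nil hch.1
        omega
      obtain ⟨b, rfl⟩ := List.length_eq_one_iff.1 h1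
      have hl : 2 * g + 1 ≤ b.length := by simpa [Shape] using hsh
      simpa using shorten_block hP1 hP hbr (hch.2.1 b (by simp)) hl
    · have hlong : Y.IsLongChain bs := by
        refine ⟨hch, ?_⟩
        rcases bs with _ | ⟨b, _ | ⟨b', bs⟩⟩
        · simp at h2
        · simp at h2
        · simp only [List.map_cons, Shape] at hsh
          obtain ⟨k, hk⟩ := (tailShape_iff _).1 hsh.2
          exact ⟨k, by rw [List.map_cons, List.map_cons, hk, hsh.1]⟩
      obtain ⟨xs, b, b', ys, d, d', e, rfl, hd, hd', hadj, hgap, he⟩ :=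
        exists_junction hP1 hP hch h2 (hbr.2 bs hlong)
      have hle : ∀ x ∈ xs ++ b :: b' :: ys, x.length ≤ 2 * g := by
        intro x hx
        rcases shape_pos hg _ hsh x.length (List.mem_map_of_mem hx) with h | h
        · exact h
        · have := congrArg List.length h
          simp at this
          omega
      obtain ⟨-, hbl, hst⟩ := hch
      have hb := hbl b (by simp)
      have hb' := hbl b' (by simp)
      have hR' : Y.R (Y.dRev e) d' := by
        refine ⟨?_, ?_⟩
        · exact (dHead_dRev e).trans (he.1.symm.trans hadj)
        · have g1 := (gap_cases _ _ _).1 hgap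
          have g2 := (gap_cases _ _ _).1 he.2
          rw [gap_cases, posArr_dRev]
          have := posLv_lt (Y.dLet e)
          have := posArr_lt (Y.dLet d)
          have := posLv_lt (Y.dLet d')
          omega
      have hbe : Y.IsBlock (b ++ [e]) := by
        refine ⟨by simp, ?_, ?_⟩
        · have := hle b (by simp)
          simp; omega
        · refine List.isChain_append.2 ⟨hb.2.2, .singleton _, ?_⟩
          intro x hx y hy
          have e1 : x = d := by
            have := hx.symm.trans hd; simpa using this
          have e2 : y = e := by simpa using hy.symm
          subst e1 e2
          exact he
      have hbe' : Y.IsBlock (Y.dRev e :: b') := by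
        refine ⟨by simp, ?_, ?_⟩
        · have := hle b' (by simp)
          simp; omega
        · refine List.isChain_cons.2 ⟨?_, hb'.2.2⟩
          intro y hy
          have e2 : y = d' := by
            have := hy.symm.trans hd'; simpa using this
          subst e2
          exact hR'
      have hst0 := List.isChain_append.1 hst
      have hc1 : Y.IsChain (xs ++ [b ++ [e]]) := by
        refine ⟨by simp, ?_, ?_⟩
        · intro x hx
          rw [List.mem_append, List.mem_singleton] at hx
          rcases hx with hx | rfl
          · exact hbl x (by simp [hx])
          · exact hbe
        · refine List.isChain_append.2 ⟨hst0.1, .singleton _, ?_⟩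
          intro x hx y hy
          have e2 : y = b ++ [e] := by simpa using hy.symm
          subst e2
          obtain ⟨p, p', q1, q2, q3⟩ := hst0.2.2 x hx b (by simp)
          exact ⟨p, p', q1, by rw [List.head?_append_of_ne_nil _ hb.1]; exact q2, q3⟩
      have hst1 := (List.isChain_cons_cons.1 hst0.2.1).2
      have hc2 : Y.IsChain ((Y.dRev e :: b') :: ys) := by
        refine ⟨by simp, ?_, ?_⟩
        · intro x hx
          rw [List.mem_cons] at hx
          rcases hx with rfl | hx
          · exact hbe'
          · exact hbl x (by simp [hx])
        · have h3 := List.isChain_cons.1 hst1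
          refine List.isChain_cons.2 ⟨?_, h3.2⟩
          intro y hy
          obtain ⟨p, p', q1, q2, q3⟩ := h3.1 y hy
          refine ⟨p, p', ?_, q2, q3⟩
          rw [List.getLast?_cons, q1]; rfl
      have hss := shape_split hg (xs.map List.length) b.length b'.length (ys.map List.length)
        (by simpa using hsh)
      simp at hn
      have s1 := ih (xs ++ [b ++ [e]]) (by simp; omega) hc1 (by simpa using hss.1)
      have s2 := ih ((Y.dRev e :: b') :: ys) (by simp; omega) hc2 (by simpa using hss.2)
      intro u v hw
      have hfl : (xs ++ b :: b' :: ys).flatten = (xs.flatten ++ b) ++ (b' ++ ys.flatten) := by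
        simp
      rw [hfl] at hw ⊢
      obtain ⟨m, hw1, hw2⟩ := walk_append.1 hw
      have hm : m = Y.dTail e := by
        cases hb'e : b' with
        | nil => rw [hb'e] at hd'; simp at hd'
        | cons y b₂ =>
          rw [hb'e] at hd' hw2
          have : y = d' := by simpa using hd'
          subst this
          rw [List.cons_append, walk_cons] at hw2
          exact hw2.1.trans (hadj.symm.trans he.1)
      subst hm
      have hw1' : Y.WalkFrom u (Y.dHead e) (xs ++ [b ++ [e]]).flatten := by
        have : (xs ++ [b ++ [e]]).flatten = (xs.flatten ++ b) ++ [e] := by simp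
        rw [this]
        exact walk_append.2 ⟨_, hw1, walk_single.2 ⟨rfl, rfl⟩⟩
      have hw2' : Y.WalkFrom (Y.dHead e) v ((Y.dRev e :: b') :: ys).flatten := by
        have : ((Y.dRev e :: b') :: ys).flatten = Y.dRev e :: (b' ++ ys.flatten) := by simp
        rw [this, walk_cons, dTail_dRev, dHead_dRev]
        exact ⟨rfl, hw2⟩
      obtain ⟨w1, k1, k2, k3⟩ := s1 _ _ hw1'
      obtain ⟨w2, l1, l2, l3⟩ := s2 _ _ hw2'
      refine ⟨w1 ++ w2, walk_append.2 ⟨_, k1, l1⟩, ?_, ?_⟩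
      · refine (htp_backtrack e hw1 hw2).trans ?_
        have := k2.append l2 k1 hw2'
        simpa using this
      · simp at k3 l3 ⊢
        omega

/-! ### Free homotopy -/

theorem cyc_split {α : Type*} {c s : List α} (h : cycContains c s) :
    ∃ x y r, c = x ++ y ∧ y ++ x = s ++ r := by
  obtain ⟨hne, hl, p, q, hpq⟩ := h
  rcases Nat.le_total p.length c.length with hp | hp
  · refine ⟨c.take p.length, c.drop p.length, (c.drop p.length ++ c.take p.length).drop s.length,
      by simp, ?_⟩
    have h1 : s ++ q = c.drop p.length ++ c := by
      have := congrArg (List.drop p.length) hpq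
      rwa [List.append_assoc, List.drop_left, List.drop_append_of_le_length hp] at this
    have h2 : s = (c.drop p.length ++ c.take p.length).take s.length := by
      have h3 := congrArg (List.take s.length) h1
      rw [List.take_left] at h3
      conv_rhs at h3 => rw [← List.take_append_drop p.length c, List.drop_append_of_le_length
        (by simp [hp]), ← List.append_assoc]
      rw [List.take_append_of_le_length (by simp; omega)] at h3
      simpa using h3
    have ht := List.take_append_drop s.length (c.drop p.length ++ c.take p.length)
    rw [← h2] at ht
    exact ht.symm
  · have h1 : (p.drop c.length ++ s) ++ q = c := by
      have := congrArg (List.drop c.length) hpq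
      rwa [List.append_assoc, List.drop_append_of_le_length hp, List.drop_left,
        ← List.append_assoc] at this
    exact ⟨p.drop c.length, s ++ q, q ++ p.drop c.length, by rw [← List.append_assoc]; exact h1.symm, by simp⟩

theorem not_cycContains_of_shorten {c s : List Y.D} (hc : ∃ v, Y.WalkFrom v v c)
    (hsr : Y.ShortestRep Set.univ Set.univ c) (hs : Y.Shorten s) : ¬ cycContains c s := by
  intro h
  obtain ⟨x, y, r, rfl, hr⟩ := cyc_split h
  obtain ⟨v, hv⟩ := hc
  obtain ⟨m, hx, hy⟩ := walk_append.1 hv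
  have hyx : Y.WalkFrom m m (y ++ x) := walk_append.2 ⟨_, hy, hx⟩
  rw [hr] at hyx
  obtain ⟨z, h1, h2⟩ := walk_append.1 hyx
  obtain ⟨w, k1, k2, k3⟩ := hs _ _ h1
  have hf : Y.FreelyHomotopic Set.univ Set.univ (x ++ y) (w ++ r) := by
    refine ⟨v, m, x, hv, walk_append.2 ⟨_, k1, h2⟩, hx, inSet_univ _, inSet_univ _,
      inSet_univ _, ?_⟩
    have e1 := (htp_cancel hx).congr (p := x ++ y) (q := []) hv (.nil _)
    have e2 := k2.congr hx (walk_append.2 ⟨_, h2, walk_revW hx⟩)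
    have e3 : x ++ y ++ (x ++ Y.revW x) ++ [] = x ++ s ++ (r ++ Y.revW x) := by
      calc _ = x ++ (y ++ x) ++ Y.revW x := by simp
        _ = _ := by rw [hr]; simp
    rw [e3] at e1
    have e4 := e1.symm.trans e2
    simpa using e4
  have := hsr _ hf
  have hlen := congrArg List.length hr
  simp at this hlen
  omega

theorem noLong (hg : 2 ≤ g) (hP1 : Y.P1) (hP : Y.P3)
    (hbr : Y.BoundaryReduced Set.univ Set.univ) {c : List Y.D} (hc : ∃ v, Y.WalkFrom v v c)
    (hsr : Y.ShortestRep Set.univ Set.univ c) : Y.NoLongBlockOrChainCyc c := by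
  refine ⟨fun s hs hb => ?_, fun bs hbs => ?_⟩
  · exact not_cycContains_of_shorten hc hsr (shorten_block hP1 hP hbr hb.1 hb.2) hs
  · refine not_cycContains_of_shorten hc hsr (shorten_shape hg hP1 hP hbr _ bs le_rfl hbs.1 ?_)
    obtain ⟨k, hk⟩ := hbs.2
    rw [hk]
    have ht := (tailShape_iff (g := g) _).2 ⟨k, rfl⟩
    cases k with
    | zero => exact ⟨rfl, ht⟩
    | succ k => exact ⟨rfl, ht⟩

theorem freely_rev {c c' : List Y.D}
    (h : Y.FreelyHomotopic Set.univ Set.univ (Y.revW c) c') :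
    Y.FreelyHomotopic Set.univ Set.univ c (Y.revW c') := by
  obtain ⟨u, v, q, h1, h2, h3, _, _, _, h4⟩ := h
  refine ⟨u, v, q, ?_, walk_revW h2, h3, inSet_univ _, inSet_univ _, inSet_univ _, ?_⟩
  · have := walk_revW h1; rwa [revW_revW] at this
  · have := Htp.rev h4
    simpa [revW_append, revW_revW] using this

theorem shortest_rev {c : List Y.D} (h : Y.ShortestRep Set.univ Set.univ c) :
    Y.ShortestRep Set.univ Set.univ (Y.revW c) := by
  intro c' hc'
  have := h _ (freely_rev hc')
  rwa [length_revW] at this ⊢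

theorem freely_refl {c : List Y.D} (hc : ∃ v, Y.WalkFrom v v c) :
    Y.FreelyHomotopic Set.univ Set.univ c c := by
  obtain ⟨v, hv⟩ := hc
  refine ⟨v, v, [], hv, hv, .nil _, inSet_univ _, inSet_univ _, inSet_univ _, ?_⟩
  simpa [revW_nil] using Htp.refl (u := v) (v := v) c

theorem freely_trans {a b c : List Y.D} (hb : b ≠ [])
    (h : Y.FreelyHomotopic Set.univ Set.univ a b) (h' : Y.FreelyHomotopic Set.univ Set.univ b c) :
    Y.FreelyHomotopic Set.univ Set.univ a c := by
  obtain ⟨u, v, q, h1, h2, h3, _, _, _, h4⟩ := h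
  obtain ⟨u', v', q', h1', h2', h3', _, _, _, h4'⟩ := h'
  have huv : v = u' := by
    cases b with
    | nil => exact absurd rfl hb
    | cons x b => exact (walk_cons.1 h2).1.trans (walk_cons.1 h1').1.symm
  subst huv
  refine ⟨u, v', q ++ q', h1, h2', walk_append.2 ⟨_, h3, h3'⟩, inSet_univ _, inSet_univ _,
    inSet_univ _, ?_⟩
  have e := Htp.trans h4 (Htp.congr h4' h3 (walk_revW h3))
  simpa [revW_append] using e

theorem exists_shortest {c : List Y.D} (hc : ∃ v, Y.WalkFrom v v c) :
    ∃ c', Y.FreelyHomotopic Set.univ Set.univ c c' ∧ Y.ShortestRep Set.univ Set.univ c' := by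
  classical
  have hex : ∃ n, ∃ c', Y.FreelyHomotopic Set.univ Set.univ c c' ∧ c'.length = n :=
    ⟨_, c, freely_refl hc, rfl⟩
  obtain ⟨c', h1, h2⟩ := Nat.find_spec hex
  refine ⟨c', h1, fun c'' h => ?_⟩
  by_cases hn : c' = []
  · subst hn; simp
  · rw [h2]
    exact Nat.find_min' hex ⟨c'', freely_trans hn h1 h, rfl⟩

theorem tiled_P (hg : 2 ≤ g) (hY : Y.IsTiledSurface) : Y.P1 ∧ Y.P3 := by
  obtain ⟨Z, hZ, φ, hV, hE, hF⟩ := hY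
  have hwalk : ∀ (l : List Y.D) (u : Y.V) (w : Z.V),
      Z.WalkFrom (φ.mV u) w (l.map fun d => (φ.mE d.1, d.2)) →
      ∃ v, φ.mV v = w ∧ Y.WalkFrom u v l := by
    intro l
    induction l with
    | nil => intro u w h; exact ⟨u, walk_nil.1 h, .nil _⟩
    | cons d l ih =>
      intro u w h
      rw [List.map_cons, walk_cons] at h
      obtain ⟨h1, h2⟩ := h
      have ht : Z.dTail (φ.mE d.1, d.2) = φ.mV (Y.dTail d) := by
        rcases d with ⟨e, b⟩; cases b <;> simp [dTail, φ.hsrc, φ.hdst]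
      have hh : Z.dHead (φ.mE d.1, d.2) = φ.mV (Y.dHead d) := by
        rcases d with ⟨e, b⟩; cases b <;> simp [dHead, φ.hsrc, φ.hdst]
      rw [hh] at h2
      obtain ⟨v, hv, hw⟩ := ih _ _ h2
      exact ⟨v, hv, walk_cons.2 ⟨hV (h1.trans ht), hw⟩⟩
  refine ⟨⟨?_, ?_⟩, ?_, ?_⟩
  · intro e e' h1 h2
    exact hE (hZ.1.1 _ _ (by rw [φ.hsrc, φ.hsrc, h1]) (by rw [φ.hlab, φ.hlab, h2]))
  · intro e e' h1 h2
    exact hE (hZ.1.2 _ _ (by rw [φ.hdst, φ.hdst, h1]) (by rw [φ.hlab, φ.hlab, h2]))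
  · intro f
    obtain ⟨⟨v, hv⟩, hw⟩ := hZ.2.1.1 (φ.mF f)
    rw [φ.hbdry] at hv hw
    have hword : Y.wordOf (Y.bdry f) = relatorWord g := by
      rw [← hw]
      simp [wordOf, dLet, φ.hlab]
    refine ⟨?_, hword⟩
    cases hL : Y.bdry f with
    | nil =>
      exfalso
      rw [hL] at hword
      have := congrArg List.length hword
      simp [wordOf, relatorWord] at this
      omega
    | cons d l =>
      rw [hL] at hv
      have ht : Z.dTail (φ.mE d.1, d.2) = φ.mV (Y.dTail d) := by
        rcases d with ⟨e, b⟩; cases b <;> simp [dTail, φ.hsrc, φ.hdst]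
      have hv0 : v = φ.mV (Y.dTail d) := by
        rw [List.map_cons, walk_cons] at hv
        exact hv.1.trans ht
      subst hv0
      obtain ⟨v', hv', hw'⟩ := hwalk _ _ _ hv
      rw [hV hv'] at hw'
      exact ⟨_, hw'⟩
  · intro f f' h
    exact hF (hZ.2.1.2 (by rw [φ.hbdry, φ.hbdry, h]))

end Complex

/-- Let `Y` be a boundary reduced tiled surface and `C` (= `c`)
a non-backtracking cycle in `Y^(1)`.  Then (1) the free homotopy class of `C` has
a shortest representative cycle in `Y^(1)`, and (2) if `C` is a shortest
representative of its free homotopy class, then neither `C` nor `C*` contains a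
long block or a long chain. -/
theorem statement_7 (g : ℕ) (hg : 2 ≤ g) (Y : Complex g) (hY : Y.IsTiledSurface)
    (hbr : Y.BoundaryReduced Set.univ Set.univ)
    (c : List Y.D) (hc : Y.IsCycle c) (hnb : Y.NonBacktrackingCyc c) :
    (∃ c', Y.FreelyHomotopic Set.univ Set.univ c c' ∧
       Y.ShortestRep Set.univ Set.univ c') ∧
    (Y.ShortestRep Set.univ Set.univ c →
       Y.NoLongBlockOrChainCyc c ∧ Y.NoLongBlockOrChainCyc (Y.revW c)) := by
  obtain ⟨hP1, hP⟩ := Complex.tiled_P hg hY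
  refine ⟨Complex.exists_shortest hc.2, fun hs => ⟨?_, ?_⟩⟩
  · exact Complex.noLong hg hP1 hP hbr hc.2 hs
  · obtain ⟨v, hv⟩ := hc.2
    exact Complex.noLong hg hP1 hP hbr ⟨v, Complex.walk_revW hv⟩ (Complex.shortest_rev hs)

end CS

end
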